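/- Let F be an algebraically closed field, let G be a group and ρ : G → GL(3,F) an injective group homomorphism. Suppose A, B ∈ G commute, the centralizers C_G(A) and C_G(B) are both proper subgroups of G, both are not solvable, and C_G(A) ≠ C_G(B). Then there exists S ∈ GL(3,F) and nonzero scalars λ ≠ μ and x ≠ y in F such that S·ρ(A)·S⁻¹ is the diagonal matrix diag(λ, λ, μ) and S·ρ(B)·S⁻¹ is the diagonal matrix diag(x, y, x). -/

import Mathlib

open scoped MatrixGroups

/-!
Work with the endomorphisms of `V = F³`. If the minimal polynomial of `ρ A` has degree `3`, then
`ρ A` has a cyclic vector and everything commuting with it is a polynomial in it, so the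
centralizer of `A` is abelian. Otherwise `ρ A` is a scalar `c` plus a nonzero map `f(·) u` of
rank one. If `f u = 0`, the centralizer preserves the flag `⟨u⟩ ⊂ ker f`, hence is solvable. So
`f u ≠ 0`, and likewise `ρ B` is a scalar plus `g(·) v` with `g v ≠ 0`. Since the rank-one parts
commute, they are proportional, which would make the centralizers equal, or `f v = g u = 0`, and
then `A` and `B` are diagonal in the basis `e, v, u` for any `e ≠ 0` in `ker f ∩ ker g`.
-/

open Module Polynomial

section DerivedSeries

open scoped commutatorElement

variable {F G V : Type*} [Field F] [Group G] [AddCommGroup V] [Module F V]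
  {ρ : Representation F G V}

theorem commutatorElement_mem_ker_of_commute {G M : Type*} [Group G] [Monoid M] {φ : G →* M}
    {g h : G} (hgh : Commute (φ g) (φ h)) : ⁅g, h⁆ ∈ φ.ker := by
  have hmem : (h * g)⁻¹ * (g * h) ∈ φ.ker := φ.eq_iff.1 <| by
    rw [map_mul, map_mul, hgh.eq]
  simpa only [commutatorElement_def, mul_inv_rev, mul_assoc] using
    φ.normal_ker.mem_comm hmem

theorem commutator_le_ker_of_finrank_eq_one (hV : finrank F V = 1) : commutator G ≤ ρ.ker := by
  rw [commutator_def, Subgroup.commutator_le]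
  intro g _ h _
  obtain ⟨c, hc, -⟩ := LinearMap.existsUnique_eq_smul_id_of_finrank_eq_one hV (ρ g)
  refine commutatorElement_mem_ker_of_commute ?_
  rw [hc]
  exact (Commute.one_left _).smul_left c

theorem derivedSeries_succ_le_ker {W : Submodule F V} (hW : ∀ g, W ≤ W.comap (ρ g)) {n : ℕ}
    (hsub : derivedSeries G n ≤ (ρ.subrepresentation W hW).ker)
    (hquot : derivedSeries G n ≤ (ρ.quotient W hW).ker) :
    derivedSeries G (n + 1) ≤ ρ.ker := by
  rw [derivedSeries_succ, Subgroup.commutator_le]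
  intro g hg h hh
  have fixes : ∀ k ∈ derivedSeries G n, ∀ w ∈ W, ρ k w = w := fun k hk w hw ↦
    congrArg Subtype.val (LinearMap.congr_fun (MonoidHom.mem_ker.1 (hsub hk)) ⟨w, hw⟩)
  have moves : ∀ k ∈ derivedSeries G n, ∀ v, ρ k v - v ∈ W := fun k hk v ↦
    (Submodule.Quotient.eq W).1
      (LinearMap.congr_fun (MonoidHom.mem_ker.1 (hquot hk)) (Submodule.Quotient.mk v))
  refine commutatorElement_mem_ker_of_commute (LinearMap.ext fun v ↦ ?_)
  have hgh : ρ g (ρ h v - v) = ρ h v - v := fixes g hg _ (moves h hh v)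
  have hhg : ρ h (ρ g v - v) = ρ g v - v := fixes h hh _ (moves g hg v)
  rw [map_sub, sub_eq_iff_eq_add] at hgh hhg
  rw [Module.End.mul_apply, Module.End.mul_apply, hgh, hhg]
  abel

theorem derivedSeries_two_le_ker (hV : finrank F V = 2) {L : Submodule F V}
    (hL : finrank F L = 1) (hinv : ∀ g, L ≤ L.comap (ρ g)) : derivedSeries G 2 ≤ ρ.ker := by
  have := FiniteDimensional.of_finrank_pos (K := F) (V := V) (by omega)
  have hquot := L.finrank_quotient_add_finrank
  refine derivedSeries_succ_le_ker hinv ?_ ?_ <;> rw [derivedSeries_one] <;>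
    refine commutator_le_ker_of_finrank_eq_one ?_ <;> omega

theorem derivedSeries_three_le_ker (hV : finrank F V = 3) {L W : Submodule F V} (hLW : L ≤ W)
    (hL : finrank F L = 1) (hW : finrank F W = 2) (hLinv : ∀ g, L ≤ L.comap (ρ g))
    (hWinv : ∀ g, W ≤ W.comap (ρ g)) : derivedSeries G 3 ≤ ρ.ker := by
  have := FiniteDimensional.of_finrank_pos (K := F) (V := V) (by omega)
  refine derivedSeries_succ_le_ker hWinv ?_ ?_
  · refine derivedSeries_two_le_ker hW (L := L.comap W.subtype) ?_ fun g v hv ↦ hLinv g hv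
    rw [← hL, (Submodule.comapSubtypeEquivOfLe hLW).finrank_eq]
  · have hquot := W.finrank_quotient_add_finrank
    exact (derivedSeries_antitone G one_le_two).trans <| derivedSeries_one G ▸
      commutator_le_ker_of_finrank_eq_one (by omega)

end DerivedSeries

section Cyclic

variable {F V : Type*} [Field F] [AddCommGroup V] [Module F V] [FiniteDimensional F V]

theorem exists_forall_aeval_apply_eq_zero_imp (a : End F V) :
    ∃ v, ∀ p : F[X], aeval a p v = 0 → aeval a p = 0 := by
  obtain ⟨x, hx⟩ := exists_ker_toSpanSingleton_eq_annihilator F[X] (AEval' a)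
  obtain ⟨v, rfl⟩ := (AEval'.of a).surjective x
  refine ⟨v, fun p hp ↦ ?_⟩
  have hmem : p ∈ annihilator F[X] (AEval' a) := by
    rw [← hx, LinearMap.mem_ker, LinearMap.toSpanSingleton_apply, ← AEval.of_aeval_smul]
    exact (AEval'.of a).map_eq_zero_iff.2 hp
  rwa [AEval.annihilator_eq_ker_aeval] at hmem

theorem exists_forall_exists_aeval_apply_eq {a : End F V}
    (ha : (minpoly F a).natDegree = finrank F V) : ∃ v, ∀ w, ∃ p : F[X], aeval a p v = w := by
  obtain ⟨v, hv⟩ := exists_forall_aeval_apply_eq_zero_imp a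
  let evalAt : degreeLT F (finrank F V) →ₗ[F] V :=
    (LinearMap.applyₗ v ∘ₗ (aeval a).toLinearMap) ∘ₗ (degreeLT F (finrank F V)).subtype
  have hinj : Function.Injective evalAt := by
    refine (injective_iff_map_eq_zero _).2 fun ⟨p, hp⟩ hpv ↦ Subtype.ext ?_
    rw [mem_degreeLT, ← ha,
      ← degree_eq_natDegree (minpoly.ne_zero (Algebra.IsIntegral.isIntegral a))] at hp
    exact eq_zero_of_dvd_of_degree_lt (minpoly.dvd F a (hv p hpv)) hp
  have hdim : finrank F (degreeLT F (finrank F V)) = finrank F V := by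
    rw [(degreeLTEquiv F _).finrank_eq, finrank_fin_fun]
  have := Module.Finite.equiv (degreeLTEquiv F (finrank F V)).symm
  have hsurj := (LinearMap.injective_iff_surjective_of_finrank_eq_finrank hdim).1 hinj
  exact ⟨v, fun w ↦ (hsurj w).imp' Subtype.val fun _ ↦ id⟩

theorem commute_aeval_of_commute {R A : Type*} [CommSemiring R] [Semiring A] [Algebra R A]
    {g a : A} (hg : Commute g a) (p : R[X]) : Commute g (aeval a p) :=
  Algebra.commute_of_mem_adjoin_singleton_of_commute (aeval_mem_adjoin_singleton R a) hg

theorem exists_eq_aeval_of_commute {a g : End F V}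
    (ha : (minpoly F a).natDegree = finrank F V) (hg : Commute g a) :
    ∃ p : F[X], g = aeval a p := by
  obtain ⟨v, hv⟩ := exists_forall_exists_aeval_apply_eq ha
  obtain ⟨p, hp⟩ := hv (g v)
  refine ⟨p, LinearMap.ext fun w ↦ ?_⟩
  obtain ⟨q, rfl⟩ := hv w
  calc g (aeval a q v) = aeval a q (g v) :=
        LinearMap.congr_fun (commute_aeval_of_commute hg q).eq v
    _ = aeval a q (aeval a p v) := by rw [hp]
    _ = aeval a p (aeval a q v) :=
        LinearMap.congr_fun (Commute.all q p |>.map (aeval a)).eq v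

theorem commute_of_natDegree_minpoly_eq_finrank {a g h : End F V}
    (ha : (minpoly F a).natDegree = finrank F V) (hg : Commute g a) (hh : Commute h a) :
    Commute g h := by
  obtain ⟨p, rfl⟩ := exists_eq_aeval_of_commute ha hg
  exact (commute_aeval_of_commute hh p).symm

end Cyclic

section Rank

variable {F V : Type*} [Field F] [AddCommGroup V] [Module F V] [FiniteDimensional F V]

theorem finrank_range_add_finrank_range_le {S T : End F V} (h : S * T = 0) :
    finrank F (LinearMap.range S) + finrank F (LinearMap.range T) ≤ finrank F V := by
  have hle : LinearMap.range T ≤ LinearMap.ker S := LinearMap.range_le_ker_iff.2 h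
  have := Submodule.finrank_mono hle
  have := S.finrank_range_add_finrank_ker
  omega

theorem exists_isRoot_minpoly_of_natDegree_add_one_eq_finrank {a : End F V}
    (ha : (minpoly F a).natDegree + 1 = finrank F V) : ∃ c, (minpoly F a).IsRoot c := by
  obtain ⟨q, hq⟩ := a.minpoly_dvd_charpoly
  have hne : minpoly F a * q ≠ 0 := hq ▸ a.charpoly_monic.ne_zero
  have hdeg := congrArg natDegree hq
  rw [natDegree_mul (left_ne_zero_of_mul hne) (right_ne_zero_of_mul hne),
    a.charpoly_natDegree] at hdeg
  obtain ⟨c, hc⟩ := exists_root_of_degree_eq_one <|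
    (degree_eq_iff_natDegree_eq (right_ne_zero_of_mul hne)).2 (by omega : q.natDegree = 1)
  refine ⟨c, ?_⟩
  rw [← End.hasEigenvalue_iff_isRoot, End.hasEigenvalue_iff_isRoot_charpoly, hq]
  exact root_mul_left_of_isRoot _ hc

theorem exists_sub_mul_sub_eq_zero_of_natDegree_minpoly_eq_two {R : Type*} [Ring R]
    [Algebra F R] {a : R} (ha : (minpoly F a).natDegree = 2) {c : F} (hc : (minpoly F a).IsRoot c) :
    ∃ d, (a - algebraMap F R c) * (a - algebraMap F R d) = 0 := by
  obtain ⟨q, hq⟩ := dvd_iff_isRoot.2 hc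
  have hmonic : (minpoly F a).Monic := minpoly.monic (by
    by_contra h
    simp [minpoly.eq_zero h] at ha)
  have hqmonic : q.Monic := (monic_X_sub_C c).of_mul_monic_left (hq ▸ hmonic)
  rw [hq, (monic_X_sub_C c).natDegree_mul hqmonic, natDegree_X_sub_C] at ha
  refine ⟨-q.coeff 0, ?_⟩
  have h0 := minpoly.aeval F a
  rw [hq, hqmonic.eq_X_add_C (by omega)] at h0
  simpa using h0

theorem exists_finrank_range_sub_algebraMap_le_one (hV : finrank F V = 3) {a : End F V}
    (ha : (minpoly F a).natDegree ≠ 3) :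
    ∃ c, finrank F (LinearMap.range (a - algebraMap F (End F V) c)) ≤ 1 := by
  have hle : (minpoly F a).natDegree ≤ 3 :=
    hV ▸ a.charpoly_natDegree ▸ natDegree_le_of_dvd a.minpoly_dvd_charpoly a.charpoly_monic.ne_zero
  have : Nontrivial V := nontrivial_of_finrank_pos (R := F) (by omega)
  have hpos := minpoly.natDegree_pos (Algebra.IsIntegral.isIntegral (R := F) a)
  obtain hone | htwo : (minpoly F a).natDegree = 1 ∨ (minpoly F a).natDegree = 2 := by omega
  · obtain ⟨c, rfl⟩ := minpoly.natDegree_eq_one_iff.1 hone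
    exact ⟨c, by
      rw [sub_self, LinearMap.range_zero, finrank_bot]
      exact zero_le_one⟩
  · obtain ⟨c, hc⟩ := exists_isRoot_minpoly_of_natDegree_add_one_eq_finrank (a := a) (by omega)
    obtain ⟨d, hd⟩ := exists_sub_mul_sub_eq_zero_of_natDegree_minpoly_eq_two htwo hc
    have := finrank_range_add_finrank_range_le hd
    by_cases hcle : finrank F (LinearMap.range (a - algebraMap F (End F V) c)) ≤ 1
    · exact ⟨c, hcle⟩
    · exact ⟨d, by omega⟩

theorem exists_eq_smulRight_of_finrank_range_le_one {T : End F V}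
    (hT : finrank F (LinearMap.range T) ≤ 1) : ∃ (f : Dual F V) (u : V), T = f.smulRight u := by
  obtain ⟨u, hu⟩ := finrank_le_one_iff.1 hT
  have hsurj : Function.Surjective (LinearMap.toSpanSingleton F _ u) := hu
  obtain ⟨f, hf⟩ :=
    projective_lifting_property (LinearMap.toSpanSingleton F _ u) T.rangeRestrict hsurj
  exact ⟨f, u, LinearMap.ext fun x ↦ congrArg Subtype.val (LinearMap.congr_fun hf x).symm⟩

end Rank

section Solvability

variable {F G V : Type*} [Field F] [Group G] [AddCommGroup V] [Module F V]
  {ρ : Representation F G V}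

theorem isSolvable_of_commute_of_mul_self_eq_zero (hV : finrank F V = 3)
    (hρ : Function.Injective ρ) {N : End F V} (hN : N ≠ 0) (hNN : N * N = 0)
    (hcomm : ∀ g, Commute (ρ g) N) : Group.IsSolvable G := by
  have := FiniteDimensional.of_finrank_pos (K := F) (V := V) (by omega)
  have hrange : finrank F (LinearMap.range N) = 1 := by
    have := finrank_range_add_finrank_range_le hNN
    have : finrank F (LinearMap.range N) ≠ 0 := by
      rwa [Ne, Submodule.finrank_eq_zero, LinearMap.range_eq_bot]
    omega
  have hker : finrank F (LinearMap.ker N) = 2 := by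
    have := N.finrank_range_add_finrank_ker
    omega
  have happly (g v) : ρ g (N v) = N (ρ g v) := LinearMap.congr_fun (hcomm g).eq v
  have hle : derivedSeries G 3 ≤ ρ.ker := by
    refine derivedSeries_three_le_ker hV (LinearMap.range_le_ker_iff.2 hNN) hrange hker ?_ ?_
    · rintro g _ ⟨v, rfl⟩
      exact ⟨ρ g v, (happly g v).symm⟩
    · intro g v hv
      rw [Submodule.mem_comap, LinearMap.mem_ker, ← happly, LinearMap.mem_ker.1 hv, map_zero]
  exact (Group.isSolvable_def G).2 ⟨3, le_bot_iff.1 ((MonoidHom.ker_eq_bot_iff ρ).2 hρ ▸ hle)⟩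

theorem exists_eq_algebraMap_add_smulRight_of_not_isSolvable (hV : finrank F V = 3)
    (hρ : Function.Injective ρ) (hG : ¬ Group.IsSolvable G) {a : End F V}
    (ha : ∀ c, a ≠ algebraMap F (End F V) c) (hcomm : ∀ g, Commute (ρ g) a) :
    ∃ (c : F) (f : Dual F V) (u : V),
      f u ≠ 0 ∧ a = algebraMap F (End F V) c + f.smulRight u := by
  have := FiniteDimensional.of_finrank_pos (K := F) (V := V) (by omega)
  have hdeg : (minpoly F a).natDegree ≠ 3 := fun hdeg ↦ hG <| Group.isSolvable_of_comm fun g h ↦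
    hρ <| by
      rw [map_mul, map_mul]
      exact commute_of_natDegree_minpoly_eq_finrank (hdeg.trans hV.symm) (hcomm g) (hcomm h)
  obtain ⟨c, hc⟩ := exists_finrank_range_sub_algebraMap_le_one hV hdeg
  obtain ⟨f, u, hfu⟩ := exists_eq_smulRight_of_finrank_range_le_one hc
  refine ⟨c, f, u, fun hzero ↦ hG ?_, sub_eq_iff_eq_add'.1 hfu⟩
  refine isSolvable_of_commute_of_mul_self_eq_zero hV hρ (sub_ne_zero.2 (ha c)) ?_ fun g ↦
    (hcomm g).sub_right (Algebra.commute_algebraMap_right c _)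
  ext v
  simp [hfu, hzero]

theorem map_ne_algebraMap_of_centralizer_ne_top (hρ : Function.Injective ρ) {A : G}
    (hA : Subgroup.centralizer {A} ≠ ⊤) (c : F) : ρ A ≠ algebraMap F (End F V) c := fun h ↦
  hA <| (Subgroup.eq_top_iff' _).2 fun g ↦ Subgroup.mem_centralizer_singleton_iff.2 <| hρ <| by
    rw [map_mul, map_mul, h]
    exact Algebra.commutes c (ρ g) |>.symm

theorem exists_map_eq_algebraMap_add_smulRight (hV : finrank F V = 3)
    (hρ : Function.Injective ρ) {A : G} (hproper : Subgroup.centralizer {A} ≠ ⊤)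
    (hsol : ¬ Group.IsSolvable (Subgroup.centralizer {A})) :
    ∃ (c : F) (f : Dual F V) (u : V),
      f u ≠ 0 ∧ ρ A = algebraMap F (End F V) c + f.smulRight u :=
  exists_eq_algebraMap_add_smulRight_of_not_isSolvable hV
    (ρ := ρ.comp (Subgroup.centralizer {A}).subtype)
    (hρ.comp (Subgroup.subtype_injective _)) hsol
    (map_ne_algebraMap_of_centralizer_ne_top hρ hproper)
    fun g ↦ (show Commute (g : G) A from (Subgroup.mem_centralizer_singleton_iff.1 g.2)).map ρ

end Solvability

section RankOne

variable {F V : Type*} [Field F] [AddCommGroup V] [Module F V] {f g : Dual F V} {u v : V}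

theorem commute_algebraMap_add_iff {R A : Type*} [CommRing R] [Ring A] [Algebra R A] {m t : A}
    {r : R} : Commute m (algebraMap R A r + t) ↔ Commute m t :=
  have hr : Commute m (algebraMap R A r) := Algebra.commute_algebraMap_right r m
  ⟨fun h ↦ add_sub_cancel_left (algebraMap R A r) t ▸ h.sub_right hr, hr.add_right⟩

theorem apply_eq_zero_or_smulRight_eq_smul_of_commute
    (h : Commute (f.smulRight u : End F V) (g.smulRight v)) (hf : f u ≠ 0) (hg : g v ≠ 0) :
    (f v = 0 ∧ g u = 0) ∨ ∃ c : F, c ≠ 0 ∧ (g.smulRight v : End F V) = c • f.smulRight u := by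
  have hcomm (w : V) : (g w * f v) • u = (f w * g u) • v := by
    simpa [mul_smul] using LinearMap.congr_fun h.eq w
  by_cases hfv : f v = 0
  · have hv : v ≠ 0 := fun hv ↦ hg (hv ▸ map_zero g)
    exact .inl ⟨hfv, by simpa [hfv, hf, hv] using (hcomm u).symm⟩
  · have hvec : g v • u = g u • v := by
      have := hcomm v
      rwa [mul_comm, mul_smul, mul_smul, smul_right_inj hfv] at this
    have hdual (w : V) : f u * g w = f w * g u := by
      have := congrArg f (hcomm w)
      simp only [map_smul, smul_eq_mul] at this
      exact mul_right_cancel₀ hfv (by linear_combination this)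
    refine .inr ⟨g v / f u, div_ne_zero hg hf, LinearMap.ext fun w ↦ ?_⟩
    refine smul_right_injective V hf ?_
    change f u • g w • v = f u • (g v / f u) • f w • u
    calc f u • g w • v = f w • g u • v := by rw [smul_smul, hdual, mul_smul]
      _ = f w • g v • u := by rw [hvec]
      _ = f u • (g v / f u) • f w • u := by
        rw [smul_smul (f u), mul_div_cancel₀ _ hf, smul_comm]

theorem exists_basis_smulRight_apply_eq_smul (hV : finrank F V = 3) (hf : f u ≠ 0)
    (hg : g v ≠ 0) (hfv : f v = 0) (hgu : g u = 0) :
    ∃ b : Basis (Fin 3) F V, (∀ i, f.smulRight u (b i) = (![0, 0, f u] i : F) • b i) ∧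
      ∀ i, g.smulRight v (b i) = (![0, g v, 0] i : F) • b i := by
  have := FiniteDimensional.of_finrank_pos (K := F) (V := V) (by omega)
  obtain ⟨e, he, he0⟩ := Submodule.exists_mem_ne_zero_of_ne_bot
    ((f.prod g).ker_ne_bot_of_finrank_lt (by simp [hV]))
  obtain ⟨hfe, hge⟩ : f e = 0 ∧ g e = 0 := by simpa using he
  have hli : LinearIndependent F ![e, v, u] := by
    refine Fintype.linearIndependent_iff.2 fun c hc ↦ ?_
    simp only [Fin.sum_univ_three, Matrix.cons_val] at hc
    have hc2 : c 2 = 0 := by simpa [hfe, hfv, hf] using congrArg f hc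
    have hc1 : c 1 = 0 := by simpa [hge, hgu, hg] using congrArg g hc
    have hc0 : c 0 = 0 := by simpa [hc1, hc2, he0] using hc
    exact Fin.forall_fin_succ.2 ⟨hc0, Fin.forall_fin_two.2 ⟨hc1, hc2⟩⟩
  refine ⟨basisOfLinearIndependentOfCardEqFinrank hli (by simp [hV]), ?_, ?_⟩ <;>
    intro i <;> fin_cases i <;> simp [*]

theorem centralizer_eq_centralizer_of_commute_iff {G M : Type*} [Group G] [Monoid M] {φ : G →* M}
    (hφ : Function.Injective φ) {A B : G} (h : ∀ m, Commute m (φ A) ↔ Commute m (φ B)) :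
    Subgroup.centralizer {A} = Subgroup.centralizer {B} := by
  ext g
  simpa only [Subgroup.mem_centralizer_singleton_iff, commute_iff_eq, ← map_mul, hφ.eq_iff]
    using h (φ g)

theorem exists_basis_map_apply_eq_smul {G : Type*} [Group G] {ρ : Representation F G V}
    (hV : finrank F V = 3) (hρ : Function.Injective ρ) {A B : G} (hAB : Commute A B)
    (hAproper : Subgroup.centralizer {A} ≠ ⊤) (hBproper : Subgroup.centralizer {B} ≠ ⊤)
    (hAsol : ¬ Group.IsSolvable (Subgroup.centralizer {A}))
    (hBsol : ¬ Group.IsSolvable (Subgroup.centralizer {B}))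
    (hne : Subgroup.centralizer {A} ≠ Subgroup.centralizer {B}) :
    ∃ (b : Basis (Fin 3) F V) (lam mu x y : F), lam ≠ mu ∧ x ≠ y ∧
      (∀ i, ρ A (b i) = (![lam, lam, mu] i : F) • b i) ∧
      ∀ i, ρ B (b i) = (![x, y, x] i : F) • b i := by
  obtain ⟨lam, f, u, hf, hA⟩ := exists_map_eq_algebraMap_add_smulRight hV hρ hAproper hAsol
  obtain ⟨x, g, v, hg, hB⟩ := exists_map_eq_algebraMap_add_smulRight hV hρ hBproper hBsol
  have hcomm : Commute (f.smulRight u : End F V) (g.smulRight v) := by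
    have h := hAB.map ρ
    rw [hA, hB] at h
    exact (commute_algebraMap_add_iff.1 (commute_algebraMap_add_iff.1 h).symm).symm
  obtain ⟨hfv, hgu⟩ | ⟨c, hc, hgf⟩ := apply_eq_zero_or_smulRight_eq_smul_of_commute hcomm hf hg
  · obtain ⟨b, hbf, hbg⟩ := exists_basis_smulRight_apply_eq_smul hV hf hg hfv hgu
    refine ⟨b, lam, lam + f u, x, x + g v, ?_, ?_, ?_, ?_⟩
    · simpa using hf
    · simpa using hg
    · intro i
      rw [hA, LinearMap.add_apply, hbf, Module.algebraMap_end_apply, ← add_smul]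
      fin_cases i <;> simp
    · intro i
      rw [hB, LinearMap.add_apply, hbg, Module.algebraMap_end_apply, ← add_smul]
      fin_cases i <;> simp
  · refine absurd (centralizer_eq_centralizer_of_commute_iff hρ fun m ↦ ?_) hne
    rw [hA, hB, commute_algebraMap_add_iff, commute_algebraMap_add_iff, hgf,
      Commute.smul_right_iff₀ hc]

end RankOne

section Matrix

open scoped Matrix

theorem exists_conj_eq_diagonal {R n : Type*} [CommRing R] [Fintype n] [DecidableEq n]
    (b : Basis n R (n → R)) :
    ∃ S : GL n R, ∀ (M : GL n R) (d : n → R), (∀ i, (M : Matrix n n R) *ᵥ b i = d i • b i) →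
      ((S * M * S⁻¹ : GL n R) : Matrix n n R) = Matrix.diagonal d := by
  let std := Pi.basisFun R n
  refine ⟨⟨b.toMatrix std, std.toMatrix b, b.toMatrix_mul_toMatrix_flip std,
    std.toMatrix_mul_toMatrix_flip b⟩, fun M d hd ↦ ?_⟩
  change b.toMatrix std * M * std.toMatrix b = Matrix.diagonal d
  rw [Matrix.mul_assoc, basis_toMatrix_basisFun_mul]
  ext i j
  have hcol : ((M : Matrix n n R) * std.toMatrix b).col j = d j • b j := hd j
  rw [Matrix.of_apply, hcol, map_smul, b.repr_self, Matrix.diagonal_apply]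
  by_cases hij : i = j <;> simp [hij]

theorem ne_zero_of_val_eq_diagonal {R n : Type*} [CommRing R] [Nontrivial R] [Fintype n]
    [DecidableEq n] {M : GL n R} {d : n → R} (h : (M : Matrix n n R) = Matrix.diagonal d) (i : n) :
    d i ≠ 0 :=
  (Pi.isUnit_iff.1 (Matrix.isUnit_diagonal.1 (h ▸ M.isUnit)) i).ne_zero

end Matrix

theorem commuting_nonsolvable_centralizers_simultaneous_diag_general
    {F : Type*} [Field F] {G : Type*} [Group G] {ρ : G →* GL (Fin 3) F} (hρ : Function.Injective ρ)
    {A B : G} (hAB : Commute A B)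
    (hAproper : Subgroup.centralizer {A} ≠ ⊤)
    (hBproper : Subgroup.centralizer {B} ≠ ⊤)
    (hAsol : ¬ Group.IsSolvable (Subgroup.centralizer {A}))
    (hBsol : ¬ Group.IsSolvable (Subgroup.centralizer {B}))
    (hne : Subgroup.centralizer {A} ≠ Subgroup.centralizer {B}) :
    ∃ (S : GL (Fin 3) F) (lam mu x y : F),
      lam ≠ 0 ∧ mu ≠ 0 ∧ x ≠ 0 ∧ y ≠ 0 ∧ lam ≠ mu ∧ x ≠ y ∧
      ((S * ρ A * S⁻¹ : GL (Fin 3) F) : Matrix (Fin 3) (Fin 3) F)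
        = Matrix.diagonal ![lam, lam, mu] ∧
      ((S * ρ B * S⁻¹ : GL (Fin 3) F) : Matrix (Fin 3) (Fin 3) F)
        = Matrix.diagonal ![x, y, x] := by
  let σ : Representation F G (Fin 3 → F) :=
    (Matrix.toLinAlgEquiv' : _ ≃ₐ[F] _).toMonoidHom.comp ((Units.coeHom _).comp ρ)
  have hσ : Function.Injective σ :=
    Matrix.toLinAlgEquiv'.injective.comp (Units.val_injective.comp hρ)
  obtain ⟨b, lam, mu, x, y, hlam, hxy, hA, hB⟩ := exists_basis_map_apply_eq_smul
    (by rw [finrank_fin_fun]) hσ hAB hAproper hBproper hAsol hBsol hne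
  obtain ⟨S, hS⟩ := exists_conj_eq_diagonal b
  have hSA := hS (ρ A) _ hA
  have hSB := hS (ρ B) _ hB
  have hA0 := ne_zero_of_val_eq_diagonal hSA
  have hB0 := ne_zero_of_val_eq_diagonal hSB
  exact ⟨S, lam, mu, x, y, hA0 0, hA0 2, hB0 0, hB0 1, hlam, hxy, hSA, hSB⟩

/-- If a group `G` embeds in `GL(3,F)` for `F` algebraically
closed, and `A, B ∈ G` commute, have proper, non-solvable and distinct
centralizers, then after a simultaneous conjugation `ρ(A) = diag(λ,λ,μ)` and
`ρ(B) = diag(x,y,x)` with `λ ≠ μ`, `x ≠ y` nonzero. -/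
theorem commuting_nonsolvable_centralizers_simultaneous_diag
    (F : Type*) [Field F] [IsAlgClosed F]
    (G : Type*) [Group G] (ρ : G →* GL (Fin 3) F) (hρ : Function.Injective ρ)
    (A B : G) (hAB : Commute A B)
    (hAproper : Subgroup.centralizer ({A} : Set G) ≠ ⊤)
    (hBproper : Subgroup.centralizer ({B} : Set G) ≠ ⊤)
    (hAsol : ¬ IsSolvable ↥(Subgroup.centralizer ({A} : Set G)))
    (hBsol : ¬ IsSolvable ↥(Subgroup.centralizer ({B} : Set G)))
    (hne : Subgroup.centralizer ({A} : Set G) ≠ Subgroup.centralizer ({B} : Set G)) :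
    ∃ (S : GL (Fin 3) F) (lam mu x y : F),
      lam ≠ 0 ∧ mu ≠ 0 ∧ x ≠ 0 ∧ y ≠ 0 ∧ lam ≠ mu ∧ x ≠ y ∧
      ((S * ρ A * S⁻¹ : GL (Fin 3) F) : Matrix (Fin 3) (Fin 3) F)
        = Matrix.diagonal ![lam, lam, mu] ∧
      ((S * ρ B * S⁻¹ : GL (Fin 3) F) : Matrix (Fin 3) (Fin 3) F)
        = Matrix.diagonal ![x, y, x] :=
  commuting_nonsolvable_centralizers_simultaneous_diag_general hρ hAB hAproper hBproper hAsol
    hBsol hne
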